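/- arXiv:1106.1705 — 7 statements merged into one kernel-verified Lean document; each statement's English description precedes it below -/
import Mathlib

section
/- (Claim 1 of §3.5.) Under the cA/n setup, one has δ₁ ≠ 0, δ₂ ≠ 0, δ₁ < a and δ₂ < a. -/
/-! Everything rests on the identity `δ * r = a * t - n`, where `t` is `s₁*` or `s₂*`. Since
`t < r` and `0 < n`, it gives `δ * r < a * r`. If `δ = 0`, then `n * q = b * t` and `a * t = n`;
coprimality of `b` and `n` forces `n ∣ t`, so `a ∣ 1`, against `2 ≤ a`. The second half of the
setup is the first with `b` replaced by `-b`, so a single lemma covers both. -/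

theorem cAn_delta_aux (n a r b s q t : ℤ) (hn : 2 ≤ n) (ha : 2 ≤ a) (hr : 1 ≤ r)
    (hbn : IsCoprime n b) (h₁ : a = b * r + n * s) (h₂ : 1 = q * r + t * s) (htr : t < r) :
    -n * q + b * t ≠ 0 ∧ -n * q + b * t < a := by
  have key : (-n * q + b * t) * r = a * t - n := by
    linear_combination n * h₂ - t * h₁
  refine ⟨fun h0 => ?_, ?_⟩
  · obtain ⟨k, rfl⟩ : n ∣ t := hbn.dvd_of_dvd_mul_left ⟨q, by linarith⟩
    have hak : a * k = 1 := by
      apply mul_left_cancel₀ (show n ≠ 0 by omega)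
      rw [h0] at key
      linarith
    have := Int.le_of_dvd one_pos ⟨k, hak.symm⟩
    omega
  · refine lt_of_mul_lt_mul_right (a := r) ?_ (by omega)
    rw [key]
    nlinarith

/-- cA/n setup (§3.5), Claim 1: `δ₁ ≠ 0`, `δ₂ ≠ 0`, `δ₁ < a` and `δ₂ < a`,
where `δ₁ = -n·q₁ + b·s₁*` and `δ₂ = -n·q₂ - b·s₂*`. -/
theorem cAn_claim1
    (n a d r₁ r₂ b s₁ s₂ q₁ q₂ s₁s s₂s : ℤ)
    (hn : 2 ≤ n) (ha : 2 ≤ a) (hd : 1 ≤ d) (hr₁ : 1 ≤ r₁) (hr₂ : 1 ≤ r₂)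
    (hbn : Int.gcd b n = 1) (hsum : r₁ + r₂ = d * a * n)
    (h₁ : a = b * r₁ + n * s₁) (h₂ : 1 = q₁ * r₁ + s₁s * s₁)
    (h₃ : a = -b * r₂ + n * s₂) (h₄ : 1 = q₂ * r₂ + s₂s * s₂)
    (hs₁0 : 0 ≤ s₁s) (hs₁r : s₁s < r₁) (hs₂0 : 0 ≤ s₂s) (hs₂r : s₂s < r₂) :
    (-n * q₁ + b * s₁s ≠ 0) ∧ (-n * q₂ - b * s₂s ≠ 0) ∧
    (-n * q₁ + b * s₁s < a) ∧ (-n * q₂ - b * s₂s < a) := by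
  have hc : IsCoprime n b := (Int.isCoprime_iff_gcd_eq_one.mpr hbn).symm
  obtain ⟨h1, h2⟩ := cAn_delta_aux n a r₁ b s₁ q₁ s₁s hn ha hr₁ hc h₁ h₂ hs₁r
  obtain ⟨h3, h4⟩ := cAn_delta_aux n a r₂ (-b) s₂ q₂ s₂s hn ha hr₂ hc.neg_right h₃ h₄ hs₂r
  rw [neg_mul b, ← sub_eq_add_neg] at h3 h4
  exact ⟨h1, h3, h2, h4⟩
end

section
/- (Claim 2 of §3.5.) Under the cA/n setup, δ₁ > 0 or δ₂ > 0. -/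
/-!
The key identity is `δᵢ * rᵢ = a * sᵢ* - n`. If `δᵢ = 0`, then `n * qᵢ = ± b * sᵢ*`, so `n ∣ sᵢ*`
by coprimality, whereas `a * sᵢ* = n` with `a ≥ 2` puts `sᵢ*` strictly between `0` and `n`.
Hence `δᵢ ≤ 0` forces `δᵢ ≤ -1`, that is `rᵢ ≤ n - a * sᵢ*`. If this held for both indices, then
`d * a * n = r₁ + r₂ ≤ 2 * n - a * (s₁* + s₂*)`, so `s₁* = s₂* = 0`; then `qᵢ * rᵢ = 1` gives
`r₁ = r₂ = 1`, contradicting `r₁ + r₂ ≥ 2 * n ≥ 4`.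
-/

/-- Non-positivity of `δ = -n * q + b * t` improves to `δ ≤ -1`, which by `δ * r = a * t - n` bounds
`r`. The second index of the theorem is the case of `-b`. -/
lemma cAn_le_of_delta_nonpos (n a r b s q t : ℤ)
    (hn : 2 ≤ n) (ha : 2 ≤ a) (hr : 1 ≤ r) (hbn : IsCoprime n b)
    (h₁ : a = b * r + n * s) (h₂ : 1 = q * r + t * s)
    (hδ : -n * q + b * t ≤ 0) : r ≤ n - a * t := by
  have key : (-n * q + b * t) * r = a * t - n := by
    linear_combination (-t) * h₁ + n * h₂
  have hne : -n * q + b * t ≠ 0 := by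
    intro h0
    rw [h0, zero_mul] at key
    have hdvd : n ∣ t := hbn.dvd_of_dvd_mul_left ⟨q, by linarith⟩
    have ht : 0 < t := by
      by_contra! h
      nlinarith
    have := Int.le_of_dvd ht hdvd
    nlinarith
  have hlt : -n * q + b * t ≤ -1 := by omega
  nlinarith

/-- cA/n setup (§3.5), Claim 2: `δ₁ > 0` or `δ₂ > 0`,
where `δ₁ = -n·q₁ + b·s₁*` and `δ₂ = -n·q₂ - b·s₂*`. -/
theorem cAn_claim2
    (n a d r₁ r₂ b s₁ s₂ q₁ q₂ s₁s s₂s : ℤ)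
    (hn : 2 ≤ n) (ha : 2 ≤ a) (hd : 1 ≤ d) (hr₁ : 1 ≤ r₁) (hr₂ : 1 ≤ r₂)
    (hbn : Int.gcd b n = 1) (hsum : r₁ + r₂ = d * a * n)
    (h₁ : a = b * r₁ + n * s₁) (h₂ : 1 = q₁ * r₁ + s₁s * s₁)
    (h₃ : a = -b * r₂ + n * s₂) (h₄ : 1 = q₂ * r₂ + s₂s * s₂)
    (hs₁0 : 0 ≤ s₁s) (hs₁r : s₁s < r₁) (hs₂0 : 0 ≤ s₂s) (hs₂r : s₂s < r₂) :
    0 < -n * q₁ + b * s₁s ∨ 0 < -n * q₂ - b * s₂s := by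
  by_contra! hcon
  obtain ⟨c₁, c₂⟩ := hcon
  have hco : IsCoprime n b := (Int.isCoprime_iff_gcd_eq_one.mpr hbn).symm
  have k₁ := cAn_le_of_delta_nonpos n a r₁ b s₁ q₁ s₁s hn ha hr₁ hco h₁ h₂ c₁
  have k₂ := cAn_le_of_delta_nonpos n a r₂ (-b) s₂ q₂ s₂s hn ha hr₂ hco.neg_right h₃ h₄
    (by linarith)
  have hda : 2 ≤ d * a := by nlinarith
  have hbig : 2 * n ≤ r₁ + r₂ := by
    rw [hsum]
    exact mul_le_mul_of_nonneg_right hda (by linarith)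
  have z₁ : s₁s = 0 := by nlinarith
  have z₂ : s₂s = 0 := by nlinarith
  subst z₁ z₂
  have e₁ : r₁ ≤ 1 := Int.le_of_dvd one_pos ⟨q₁, by linarith⟩
  have e₂ : r₂ ≤ 1 := Int.le_of_dvd one_pos ⟨q₂, by linarith⟩
  linarith
end

section
/- (Remark 3.1.) Under the cA/n setup, if δ₁ > 0, δ₂ > 0 and gcd(a, r₁) = 1, then δ₁ + δ₂ = a. -/
/-! The setup gives `δ₁ r₁ + n = a s₁*` and `δ₂ r₂ + n = a s₂*`. Since `sᵢ* < rᵢ`, each `δᵢ < a`, so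
`0 < δ₁ + δ₂ < 2a`. Modulo `a` one has `r₂ ≡ -r₁`, so subtracting the two identities yields
`a ∣ r₁ (δ₁ + δ₂)`, and coprimality of `a` and `r₁` gives `a ∣ δ₁ + δ₂`. -/

/-- cA/n setup (§3.5), Remark 3.1: if `δ₁ > 0`, `δ₂ > 0` and `gcd(a, r₁) = 1`,
then `δ₁ + δ₂ = a`, where `δ₁ = -n·q₁ + b·s₁*` and `δ₂ = -n·q₂ - b·s₂*`. -/
theorem cAn_remark31
    (n a d r₁ r₂ b s₁ s₂ q₁ q₂ s₁s s₂s : ℤ)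
    (hn : 2 ≤ n) (ha : 2 ≤ a) (hd : 1 ≤ d) (hr₁ : 1 ≤ r₁) (hr₂ : 1 ≤ r₂)
    (hbn : Int.gcd b n = 1) (hsum : r₁ + r₂ = d * a * n)
    (h₁ : a = b * r₁ + n * s₁) (h₂ : 1 = q₁ * r₁ + s₁s * s₁)
    (h₃ : a = -b * r₂ + n * s₂) (h₄ : 1 = q₂ * r₂ + s₂s * s₂)
    (hs₁0 : 0 ≤ s₁s) (hs₁r : s₁s < r₁) (hs₂0 : 0 ≤ s₂s) (hs₂r : s₂s < r₂)
    (hδ₁ : 0 < -n * q₁ + b * s₁s) (hδ₂ : 0 < -n * q₂ - b * s₂s)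
    (har₁ : Int.gcd a r₁ = 1) :
    (-n * q₁ + b * s₁s) + (-n * q₂ - b * s₂s) = a := by
  have e₁ : (-n * q₁ + b * s₁s) * r₁ + n = a * s₁s := by
    linear_combination n * h₂ - s₁s * h₁
  have e₂ : (-n * q₂ - b * s₂s) * r₂ + n = a * s₂s := by
    linear_combination n * h₄ - s₂s * h₃
  generalize -n * q₁ + b * s₁s = δ₁ at *
  generalize -n * q₂ - b * s₂s = δ₂ at *
  have l₁ : δ₁ < a := by nlinarith
  have l₂ : δ₂ < a := by nlinarith
  have hdvd : a ∣ r₁ * (δ₁ + δ₂) :=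
    ⟨s₁s - s₂s + d * n * δ₂, by linear_combination e₁ - e₂ + δ₂ * hsum⟩
  obtain ⟨k, hk⟩ := Int.dvd_of_dvd_mul_right_of_gcd_one hdvd har₁
  have k0 : 0 < k := by nlinarith
  have k2 : k < 2 := by nlinarith
  obtain rfl : k = 1 := by omega
  linarith
end

section
/- (§3.5, concluding observation.) Under the cA/n setup, if r₁ ≥ r₂ then δ₁ > 0, and if r₂ ≥ r₁ then δ₂ > 0. In particular, extracting over the point of highest index always yields a positive δ. -/
/-!
Multiplying `δ₁ = -n q₁ + b s₁*` by `r₁` and eliminating `s₁`, `q₁` gives `δ₁ r₁ = a s₁* - n`.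
The larger of the two indices is at least `d a n / 2 ≥ n`, so `δ₁ ≤ 0` would put the multiple
`a s₁* - n` of `r₁` in `[-n, 0]` and leave two cases. If `s₁* = 0`, then `r₁` is a unit, which
contradicts `r₁ ≥ n ≥ 2`. If `δ₁ = 0`, then `n ∣ b s₁*`, hence `n ∣ s₁*` by coprimality, and
`a s₁* ≥ 2 n > n`. The second index is the same argument with `b` replaced by `-b`.
-/

/-- Positivity of `δ` at one point, needing only that its index `r` is at least `n`. -/
theorem delta_pos_of_le_index {n a r b s q t : ℤ}
    (hn : 2 ≤ n) (ha : 2 ≤ a) (hbn : IsCoprime n b) (hr : n ≤ r)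
    (h₁ : a = b * r + n * s) (h₂ : 1 = q * r + t * s) (ht : 0 ≤ t) :
    0 < -n * q + b * t := by
  have key : (-n * q + b * t) * r = a * t - n := by
    linear_combination n * h₂ - t * h₁
  by_contra! hneg
  rcases ht.eq_or_lt with rfl | htpos
  · have hq : 0 < q := by
      by_contra! hq
      nlinarith
    nlinarith
  · rcases hneg.eq_or_lt with h0 | hlt
    · have hdvd : n ∣ b * t := ⟨q, by linarith⟩
      have hle : n ≤ t := Int.le_of_dvd htpos (hbn.dvd_of_dvd_mul_left hdvd)
      rw [h0] at key
      nlinarith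
    · nlinarith [mul_pos (show 0 < a by linarith) htpos]

/-- The larger of two indices with sum `d a n` is at least `n`, since `d a ≥ 2`. -/
theorem le_larger_index {n a d r r' : ℤ} (hn : 2 ≤ n) (ha : 2 ≤ a) (hd : 1 ≤ d)
    (hsum : r + r' = d * a * n) (h : r' ≤ r) : n ≤ r := by
  have hda : 2 ≤ d * a := by nlinarith
  nlinarith

/-- cA/n setup (§3.5), concluding observation: if `r₁ ≥ r₂` then `δ₁ > 0`, and
if `r₂ ≥ r₁` then `δ₂ > 0`, where `δ₁ = -n·q₁ + b·s₁*` and `δ₂ = -n·q₂ - b·s₂*`. -/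
theorem cAn_highest_index
    (n a d r₁ r₂ b s₁ s₂ q₁ q₂ s₁s s₂s : ℤ)
    (hn : 2 ≤ n) (ha : 2 ≤ a) (hd : 1 ≤ d) (hr₁ : 1 ≤ r₁) (hr₂ : 1 ≤ r₂)
    (hbn : Int.gcd b n = 1) (hsum : r₁ + r₂ = d * a * n)
    (h₁ : a = b * r₁ + n * s₁) (h₂ : 1 = q₁ * r₁ + s₁s * s₁)
    (h₃ : a = -b * r₂ + n * s₂) (h₄ : 1 = q₂ * r₂ + s₂s * s₂)
    (hs₁0 : 0 ≤ s₁s) (hs₁r : s₁s < r₁) (hs₂0 : 0 ≤ s₂s) (hs₂r : s₂s < r₂) :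
    (r₂ ≤ r₁ → 0 < -n * q₁ + b * s₁s) ∧ (r₁ ≤ r₂ → 0 < -n * q₂ - b * s₂s) := by
  have hcop : IsCoprime n b := (Int.isCoprime_iff_gcd_eq_one.mpr hbn).symm
  refine ⟨fun h => ?_, fun h => ?_⟩
  · exact delta_pos_of_le_index hn ha hcop (le_larger_index hn ha hd hsum h) h₁ h₂ hs₁0
  · have hr : n ≤ r₂ := le_larger_index hn ha hd (by rw [add_comm]; exact hsum) h
    have := delta_pos_of_le_index hn ha hcop.neg_right hr h₃ h₄ hs₂0
    linarith
end

section
/- (Remark 2.2, interchangeability criterion.) Let d ≥ 2 and let b = (b₁,…,b_d) and c = (c₁,…,c_d) be vectors in ℝ^d with all coordinates strictly positive. If b_j·c_l ≠ b_l·c_j for all indices j ≠ l, then there exists an index i such that c lies in the interior of σ_i(b), and there exists an index k such that b lies in the interior of σ_k(c); that is, b and c are interchangeable. -/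
/-!
Choose `i` minimizing the ratio `c i / b i` and put `lam = c i / b i`. Then `c - lam • b` vanishes
at `i`, is nonnegative elsewhere by minimality, and is nonzero elsewhere because the cross products
`b j * c i` and `b i * c j` differ; its coordinates are the required coefficients of the `e_j`,
`j ≠ i`. This gives one half of the theorem (`exists_inInteriorCone`). The hypotheses are symmetric
in `b` and `c`, so exchanging the two vectors gives the other half.
-/

open Finset in
/-- `c` lies in the interior of the cone `σ_i(b)`, the cone obtained from the
first quadrant cone of `ℝ^d` by replacing the `i`-th standard basis vector by `b`:
`c = λ·b + Σ_{j ≠ i} μ_j·e_j` with `λ > 0` and all `μ_j > 0`. -/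
def InInteriorCone {d : ℕ} (b c : Fin d → ℝ) (i : Fin d) : Prop :=
  ∃ lam : ℝ, 0 < lam ∧ ∃ mu : Fin d → ℝ, (∀ j, j ≠ i → 0 < mu j) ∧
    c = lam • b + ∑ j ∈ univ.filter (· ≠ i), mu j • (Pi.single j 1 : Fin d → ℝ)

theorem exists_inInteriorCone {d : ℕ} (hd : 2 ≤ d) (b c : Fin d → ℝ)
    (hb : ∀ j, 0 < b j) (hc : ∀ j, 0 < c j)
    (h : ∀ j l, j ≠ l → b j * c l ≠ b l * c j) :
    ∃ i, InInteriorCone b c i := by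
  have : Nonempty (Fin d) := ⟨⟨0, by omega⟩⟩
  obtain ⟨i, hi⟩ := Finite.exists_min (fun j => c j / b j)
  refine ⟨i, c i / b i, div_pos (hc i) (hb i), fun j => c j - c i / b i * b j, ?_, ?_⟩
  · intro j hj
    have hle : c i / b i * b j ≤ c j := (le_div_iff₀ (hb j)).mp (hi j)
    refine sub_pos.mpr (lt_of_le_of_ne hle fun heq => h j i hj ?_)
    have hbi := (hb i).ne'
    rw [← heq]
    field_simp
  · ext l
    have hbi := (hb i).ne'
    by_cases hl : l = i
    · subst hl
      simp [Finset.sum_apply, Pi.single_apply, hbi]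
    · simp [Finset.sum_apply, Pi.single_apply, hl]

/-- Remark 2.2, interchangeability criterion: if `b, c ∈ ℝ^d` have strictly
positive coordinates and `b_j·c_l ≠ b_l·c_j` for all `j ≠ l`, then `c` lies in
the interior of some `σ_i(b)` and `b` lies in the interior of some `σ_k(c)`. -/
theorem interchangeable_of_cross_products_ne
    (d : ℕ) (hd : 2 ≤ d) (b c : Fin d → ℝ)
    (hb : ∀ j, 0 < b j) (hc : ∀ j, 0 < c j)
    (h : ∀ j l, j ≠ l → b j * c l ≠ b l * c j) :
    (∃ i, InInteriorCone b c i) ∧ (∃ k, InInteriorCone c b k) := by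
  exact ⟨exists_inInteriorCone hd b c hb hc h,
    exists_inInteriorCone hd c b hc hb fun j l hjl => by
      simpa [mul_comm] using (h l j hjl.symm)⟩
end

section
/- (Condition ♯ for the cA/n case, §3.5 Subcase 1.) Under the cA/n setup, set in ℚ⁴: v₁ := (r₁/n, r₂/n, a/n, 1) and v₂ := ((r₁ − s₁*)/n, (r₂ − δ₁·d·n + s₁*)/n, (a − δ₁)/n, 1). Then v₂ = ((r₁ − s₁*)/r₁)·v₁ + (d·n/r₁)·e₂ + (1/r₁)·e₃ + (s₁*/r₁)·e₄, and v₁ = (s₁*/n)·e₁ + ((δ₁·d·n − s₁*)/n)·e₂ + (δ₁/n)·e₃ + v₂, where e₁,…,e₄ is the standard basis of ℚ⁴. -/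
/-!
Both expansions are checked coordinatewise. The second is immediate from the definitions of
`v₁` and `v₂`. In the first, after clearing the denominators `n` and `r₁`, the third coordinate
amounts to `δ₁ r₁ + n = a s₁*` (`mul_delta_add`), and the second coordinate amounts to
`s₁* (r₁ + r₂) = d n (δ₁ r₁ + n)`, which is that relation combined with `r₁ + r₂ = d a n`.
-/

/-- The relation `δ₁ r₁ + n = a s₁*`: the integer identity that makes the second and third
coordinates of the expansion of `v₂` in the cone of `v₁` agree. -/
theorem mul_delta_add (n a b r s q t δ : ℤ) (h₁ : a = b * r + n * s) (h₂ : 1 = q * r + t * s)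
    (hδ : δ = -n * q + b * t) : δ * r + n = a * t := by
  linear_combination r * hδ - t * h₁ + n * h₂


/-- Condition ♯ for the cA/n case (§3.5, Subcase 1): with
`v₁ = (r₁/n, r₂/n, a/n, 1)` and
`v₂ = ((r₁-s₁*)/n, (r₂-δ₁·d·n+s₁*)/n, (a-δ₁)/n, 1)` in ℚ⁴ (where
`δ₁ = -n·q₁ + b·s₁*`), one has
`v₂ = ((r₁-s₁*)/r₁)·v₁ + (d·n/r₁)·e₂ + (1/r₁)·e₃ + (s₁*/r₁)·e₄` and
`v₁ = (s₁*/n)·e₁ + ((δ₁·d·n-s₁*)/n)·e₂ + (δ₁/n)·e₃ + v₂`. -/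
theorem cAn_condition_sharp
    (n a d r₁ r₂ b s₁ s₂ q₁ q₂ s₁s s₂s : ℤ)
    (hn : 2 ≤ n) (ha : 2 ≤ a) (hd : 1 ≤ d) (hr₁ : 1 ≤ r₁) (hr₂ : 1 ≤ r₂)
    (hbn : Int.gcd b n = 1) (hsum : r₁ + r₂ = d * a * n)
    (h₁ : a = b * r₁ + n * s₁) (h₂ : 1 = q₁ * r₁ + s₁s * s₁)
    (h₃ : a = -b * r₂ + n * s₂) (h₄ : 1 = q₂ * r₂ + s₂s * s₂)
    (hs₁0 : 0 ≤ s₁s) (hs₁r : s₁s < r₁) (hs₂0 : 0 ≤ s₂s) (hs₂r : s₂s < r₂)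
    (δ₁ : ℤ) (hδ₁ : δ₁ = -n * q₁ + b * s₁s)
    (v₁ v₂ : Fin 4 → ℚ)
    (hv₁ : v₁ = ![(r₁ : ℚ) / n, (r₂ : ℚ) / n, (a : ℚ) / n, 1])
    (hv₂ : v₂ = ![((r₁ : ℚ) - s₁s) / n, ((r₂ : ℚ) - δ₁ * d * n + s₁s) / n,
      ((a : ℚ) - δ₁) / n, 1]) :
    v₂ = (((r₁ : ℚ) - s₁s) / r₁) • v₁ + (((d : ℚ) * n) / r₁) • ![0, 1, 0, 0]
        + ((1 : ℚ) / r₁) • ![0, 0, 1, 0] + ((s₁s : ℚ) / r₁) • ![0, 0, 0, 1] ∧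
    v₁ = ((s₁s : ℚ) / n) • ![1, 0, 0, 0]
        + (((δ₁ : ℚ) * d * n - s₁s) / n) • ![0, 1, 0, 0]
        + ((δ₁ : ℚ) / n) • ![0, 0, 1, 0] + v₂ := by
  have hn' : (n : ℚ) ≠ 0 := by exact_mod_cast (by lia : n ≠ 0)
  have hr' : (r₁ : ℚ) ≠ 0 := by exact_mod_cast (by lia : r₁ ≠ 0)
  have hsum' : (r₁ : ℚ) + r₂ = d * a * n := by exact_mod_cast hsum
  have key : (δ₁ : ℚ) * r₁ + n = a * s₁s := by
    exact_mod_cast mul_delta_add n a b r₁ s₁ q₁ s₁s δ₁ h₁ h₂ hδ₁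
  subst hv₁ hv₂
  constructor
  · ext i
    fin_cases i <;> simp <;> field_simp
    · linear_combination (-(d : ℚ) * n) * key + (s₁s : ℚ) * hsum'
    · linear_combination -key
    · ring
  · ext i
    fin_cases i <;> simp <;> field_simp <;> ring
end

section
/- (Nefness conditions in §3.5, Subcase 1.) Under the cA/n setup, assume δ₁ > 0. Then n − a·s₁* < 0, and in ℚ one has (1/r₁)·(−(a·d·n)/r₂ + 1) < 0. (These are the conditions c₀ − a·q₀ < 0 and T(f,g,D₀) < 0 of the paper's nefness criterion for the Kawamata blowup over Q₁, with c₀ = n and q₀ = s₁*.) -/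
/-! Both inequalities come from exact identities. Multiplying `a = b r₁ + n s₁` by `s₁*` and
using `s₁* s₁ = 1 - q₁ r₁` gives `a s₁* - n = r₁ δ₁`, which is positive when `δ₁` is.
Since `a d n = r₁ + r₂`, the rational expression equals `-1 / r₂`. -/

/-- cA/n setup (§3.5), Subcase 1 nefness conditions: if `δ₁ > 0` then
`n - a·s₁* < 0` and `(1/r₁)·(-(a·d·n)/r₂ + 1) < 0` (in ℚ), where
`δ₁ = -n·q₁ + b·s₁*`. -/
theorem cAn_nefness_subcase1
    (n a d r₁ r₂ b s₁ s₂ q₁ q₂ s₁s s₂s : ℤ)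
    (hn : 2 ≤ n) (ha : 2 ≤ a) (hd : 1 ≤ d) (hr₁ : 1 ≤ r₁) (hr₂ : 1 ≤ r₂)
    (hbn : Int.gcd b n = 1) (hsum : r₁ + r₂ = d * a * n)
    (h₁ : a = b * r₁ + n * s₁) (h₂ : 1 = q₁ * r₁ + s₁s * s₁)
    (h₃ : a = -b * r₂ + n * s₂) (h₄ : 1 = q₂ * r₂ + s₂s * s₂)
    (hs₁0 : 0 ≤ s₁s) (hs₁r : s₁s < r₁) (hs₂0 : 0 ≤ s₂s) (hs₂r : s₂s < r₂)
    (hδ₁ : 0 < -n * q₁ + b * s₁s) :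
    n - a * s₁s < 0 ∧
    (1 / (r₁ : ℚ)) * (-(((a : ℚ) * d * n) / r₂) + 1) < 0 := by
  constructor
  · have key : a * s₁s - n = r₁ * (-n * q₁ + b * s₁s) := by
      linear_combination s₁s * h₁ - n * h₂
    have hpos : 0 < r₁ * (-n * q₁ + b * s₁s) := mul_pos (by linarith) hδ₁
    linarith
  · have h1 : (0 : ℚ) < r₁ := by exact_mod_cast hr₁
    have h2 : (0 : ℚ) < r₂ := by exact_mod_cast hr₂
    have hs : (a : ℚ) * d * n = r₁ + r₂ := by
      have h : (r₁ : ℚ) + r₂ = d * a * n := by exact_mod_cast hsum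
      rw [h]
      ring
    have e : (1 / (r₁ : ℚ)) * (-(((a : ℚ) * d * n) / r₂) + 1) = -(1 / r₂) := by
      rw [hs]
      field_simp
      ring
    rw [e]
    exact neg_neg_of_pos (one_div_pos.mpr h2)
end
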